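/- Let n ≥ 0 and let Gen(n) be the list of arrangements produced by the permutation-iteration algorithm (defined in the context). Then Gen(n) has length n! and its entries are pairwise distinct; consequently every bijection of Fin n occurs exactly once in Gen(n). -/

import Mathlib

/-- `cyc i j` is the permutation of positions with `i ↦ j`, `p ↦ p - 1` for `i < p ≤ j`,
and every other position fixed (the cycle `(j, j-1, …, i)`); it describes extracting
the entry at position `j` and inserting it at position `i`. -/
def cyc {n : ℕ} (i j : Fin n) : Equiv.Perm (Fin n) :=
  (((List.finRange n).filter (fun p => decide (i ≤ p ∧ p ≤ j))).reverse).formPerm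

/-- `left_i`: exchange the entries at positions `i` and `i+1`. -/
def leftMove (n i : ℕ) (a : Equiv.Perm (Fin n)) : Equiv.Perm (Fin n) :=
  if h : i + 1 < n then (Equiv.swap ⟨i, by omega⟩ ⟨i + 1, h⟩).trans a else a

/-- `right_i`: move the entry at position `n-1` to position `i`, shifting the entries
at positions `i, …, n-2` one position to the right. -/
def rightMove (n i : ℕ) (a : Equiv.Perm (Fin n)) : Equiv.Perm (Fin n) :=
  if h : i + 1 < n then (cyc (⟨i, by omega⟩ : Fin n) ⟨n - 1, by omega⟩).trans a else a

/-- The pattern of moves performed between the recursive calls on a sublist of `m = n - i`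
elements: one `left`, then `m - 3` times `right` (if `m` is even) or `left` (if `m` is odd),
and finally (when `m > 2`) one more `left`.  `true` codes `left`, `false` codes `right`. -/
def movesList (m : ℕ) : List Bool :=
  true :: (List.replicate (m - 3) (if Even m then false else true) ++
    if 2 < m then [true] else [])

/-- The recursive generation procedure `gen(a, i)` (with an extra fuel argument making the
recursion structural; `fuel = n - i` always suffices, and `Gen` below uses fuel `n`).
If `i ≥ n - 1` it emits `[a]`; otherwise it first emits `gen(a, i+1)` (the "no-op" call)
and then, for each move prescribed by `movesList (n - i)`, applies that move at position `i`
to the last arrangement emitted so far and emits the generated list of the result. -/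
def gen (n : ℕ) : ℕ → Equiv.Perm (Fin n) → ℕ → List (Equiv.Perm (Fin n))
  | 0, a, _ => [a]
  | fuel + 1, a, i =>
      if i + 1 < n then
        (movesList (n - i)).foldl
          (fun acc b =>
            acc ++ gen n fuel
              ((if b then leftMove n i else rightMove n i) (acc.getLastD 1)) (i + 1))
          (gen n fuel a (i + 1))
      else [a]

/-- `Gen n = gen(id, 0)`: the full list of arrangements produced by the algorithm. -/
def Gen (n : ℕ) : List (Equiv.Perm (Fin n)) := gen n n 1 0

/-!
Every move is right multiplication by a fixed permutation of the positions, hence so is passing from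
`a` to the last entry of `gen(a, i)`; call that multiplier `lastFactor n i`, and put `m = n - i`.
By induction `gen(a, i)` lists exactly the arrangements agreeing with `a` at the positions below
`i`: it is enough that the arrangements starting the `m` rounds carry distinct entries at
position `i`.

* If `m` is odd or `m = 2`, all moves are `left` and the starts are the `a * c ^ r` with
  `c = lastFactor n (i + 1) * left_i`. Here `c` is an `m`-cycle of the positions from `i` on, so
  the starts differ at `i`, and `c ^ m = 1` gives `lastFactor n i = left_i`.
* If `m ≥ 4` is even, then `lastFactor n (i + 1) = left_{i+1}`. With `u = left_{i+1} * left_i` and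
  `d = left_{i+1} * right_i` the starts are `a`, then `a * u * d ^ r` for `r < m - 2`, and
  `a * u * d ^ (m - 3) * u`. At position `i` they carry the entries of `a * u` along an orbit of the
  `(m - 1)`-cycle `d` and at its fixed point `i + 2`.

The two cases feed each other: `lastFactor` for even `m` contains the power `d ^ (m - 3)`, whose
exponent is coprime to `m - 1`, and this is what makes `c` a single cycle for the odd `m + 1`.
-/

open Equiv Equiv.Perm

section Cycles

variable {α : Type*} [DecidableEq α] {f : Perm α} {x y z : α}

theorem isCycle_mul_swap [Finite α] (hf : f.IsCycle) (hx : f x ≠ x) (hy : f y = y) :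
    (f * swap x y).IsCycle := by
  have hxy : x ≠ y := fun h => hx (h ▸ hy)
  have apply_x : (f * swap x y) x = y := by simp [hy]
  have apply_y : (f * swap x y) y = f x := by simp
  have apply_of_ne {z : α} (hzx : z ≠ x) (hzy : z ≠ y) : (f * swap x y) z = f z := by
    simp [swap_apply_of_ne_of_ne hzx hzy]
  have sameCycle_y : (f * swap x y).SameCycle x y :=
    ⟨1, by rw [zpow_one, apply_x]⟩
  have sameCycle_pow (k : ℕ) : (f * swap x y).SameCycle x ((f ^ k) x) := by
    induction k with
    | zero => exact .refl _ _
    | succ k ih =>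
      rw [pow_succ', mul_apply]
      rcases eq_or_ne ((f ^ k) x) x with hkx | hkx
      · rw [hkx, ← apply_y]
        exact sameCycle_apply_right.2 sameCycle_y
      · have hky : (f ^ k) x ≠ y := fun h =>
          hxy ((f ^ k).injective (h.trans (pow_apply_eq_self_of_apply_eq_self hy k).symm))
        rw [← apply_of_ne hkx hky]
        exact sameCycle_apply_right.2 ih
  refine ⟨x, apply_x.trans_ne hxy.symm, fun z hz => ?_⟩
  rcases eq_or_ne z y with rfl | hzy
  · exact sameCycle_y
  rcases eq_or_ne z x with rfl | hzx
  · exact .refl _ _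
  obtain ⟨k, rfl⟩ := hf.exists_pow_eq hx (apply_of_ne hzx hzy ▸ hz)
  exact sameCycle_pow k

theorem card_support_mul_swap [Fintype α] (hx : f x ≠ x) (hy : f y = y) :
    (f * swap x y).support.card = f.support.card + 1 := by
  have hxy : x ≠ y := fun h => hx (h ▸ hy)
  have support_eq : (f * swap x y).support = insert y f.support := by
    ext z
    rcases eq_or_ne z x with rfl | hzx
    · simp [hx, hy, hxy.symm]
    rcases eq_or_ne z y with rfl | hzy
    · simp [show f x ≠ z from fun h => hxy (f.injective (h.trans hy.symm))]
    · simp [swap_apply_of_ne_of_ne hzx hzy, hzy]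
  rw [support_eq, Finset.card_insert_of_notMem (by simpa using hy)]

theorem nodup_map_pow_apply [Fintype α] (hf : f.IsCycle) (hx : f x ≠ x) :
    ((List.range f.support.card).map fun r => (f ^ r) x).Nodup := by
  have h := nodup_toList f x
  rw [toList, hf.cycleOf_eq hx, ← List.range_map_iterate] at h
  simpa only [iterate_eq_pow] using h

theorem swap_mul_swap_conj {w : α} (h : [w, x, y, z].Nodup) :
    swap y z * swap x y * (swap y z * swap w x) * (swap y z * swap x y) =
      swap y z * swap y w := by
  have hwx : w ≠ x := by aesop
  have hwy : w ≠ y := by aesop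
  have hcomm : swap y z * swap w x = swap w x * swap y z := (disjoint_swap_swap h).commute.eq.symm
  calc swap y z * swap x y * (swap y z * swap w x) * (swap y z * swap x y)
      = swap y z * (swap x y * swap w x * swap x y) := by
        simp only [hcomm, mul_assoc, swap_mul_self_mul]
    _ = swap y z * swap y w := by rw [swap_mul_swap_mul_swap hwx hwy]

end Cycles

section Cyc

theorem formPerm_apply_of_infix {α : Type*} [DecidableEq α] {l : List α} {x y : α}
    (hl : l.Nodup) (h : [x, y] <:+: l) : l.formPerm x = y := by
  obtain ⟨s, t, rfl⟩ := h
  have := List.formPerm_apply_lt_getElem _ hl s.length (by simp)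
  simpa using this

variable {n : ℕ} {i j p q : Fin n}

theorem pair_infix_finRange (h : (p : ℕ) + 1 = q) : [p, q] <:+: List.finRange n := by
  refine List.infix_iff_getElem?.2 ⟨p, by simp; omega, fun k hk => ?_⟩
  obtain rfl | rfl : k = 0 ∨ k = 1 := by simp at hk; omega
  · simp
  · simp [add_comm 1, h]

theorem cyc_apply_of_succ (hip : i ≤ p) (hqj : q ≤ j) (h : (p : ℕ) + 1 = q) : cyc i j q = p := by
  have hpq : p ≤ q := by omega
  have hinfix := (pair_infix_finRange h).filter fun r => decide (i ≤ r ∧ r ≤ j)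
  rw [List.filter_eq_self.2 (by simp [hip, hip.trans hpq, hpq.trans hqj, hqj])] at hinfix
  rw [cyc, List.formPerm_reverse, inv_eq_iff_eq]
  exact (formPerm_apply_of_infix ((List.nodup_finRange n).filter _) hinfix).symm

theorem isCycle_cyc (hij : i < j) : (cyc i j).IsCycle := by
  refine List.isCycle_formPerm (List.nodup_reverse.2 ((List.nodup_finRange n).filter _)) ?_
  have pair_nodup : [i, j].Nodup := by simpa using hij.ne
  exact (List.subperm_of_subset pair_nodup (by simp [hij.le])).length_le

theorem support_cyc (hij : i < j) : (cyc i j).support = Finset.Icc i j := by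
  rw [cyc, List.support_formPerm_of_nodup _
    (List.nodup_reverse.2 ((List.nodup_finRange n).filter _))]
  · ext
    simp
  · intro x hx
    have hi : i ∈ [x] := by rw [← hx]; simpa using hij.le
    have hj : j ∈ [x] := by rw [← hx]; simpa using hij.le
    exact hij.ne ((List.mem_singleton.1 hi).trans (List.mem_singleton.1 hj).symm)

end Cyc

section Factors

/-- The permutation of positions by which `left_i` multiplies an arrangement on the right. -/
def leftFactor (n i : ℕ) : Perm (Fin n) := leftMove n i 1

/-- The permutation of positions by which `right_i` multiplies an arrangement on the right. -/
def rightFactor (n i : ℕ) : Perm (Fin n) := rightMove n i 1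

/-- The right multipliers of the moves that `gen(a, i)` performs between its recursive calls. -/
def moveFactors (n i : ℕ) : List (Perm (Fin n)) :=
  (movesList (n - i)).map fun b => if b then leftFactor n i else rightFactor n i

/-- The sizes `m ≥ 1` of a tail for which the move pattern contains no `right` move. -/
abbrev IsAllLeft (m : ℕ) : Prop := Odd m ∨ m = 2

/-- The effect of a recursive call followed by `left_i`, when the call acts as `left_{i+1}`, which
it does for even `n - i`. -/
def leftRound (n i : ℕ) : Perm (Fin n) := leftFactor n (i + 1) * leftFactor n i

/-- The effect of a recursive call followed by `right_i`, when the call acts as `left_{i+1}`. -/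
def rightRound (n i : ℕ) : Perm (Fin n) := leftFactor n (i + 1) * rightFactor n i

/-- The right multiplier taking `a` to the last entry of `gen(a, i)`. -/
def lastFactor (n i : ℕ) : Perm (Fin n) :=
  if IsAllLeft (n - i) then leftFactor n i
  else leftRound n i * rightRound n i ^ (n - i - 3) * leftRound n i * leftFactor n (i + 1)

/-- The permutations of the positions `i, …, n - 1`, as a subgroup of all permutations. -/
def tailPerms (n i : ℕ) : Subgroup (Perm (Fin n)) :=
  fixingSubgroup (Perm (Fin n)) {x : Fin n | (x : ℕ) < i}

variable {n i : ℕ}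

theorem move_eq_mul (b : Bool) (a : Perm (Fin n)) :
    (if b then leftMove n i else rightMove n i) a =
      a * if b then leftFactor n i else rightFactor n i := by
  cases b <;> by_cases h : i + 1 < n <;>
    simp [leftFactor, rightFactor, leftMove, rightMove, h, Perm.mul_def, Perm.one_def]

theorem moveFactors_of_isAllLeft (hi : i + 1 < n) (h : IsAllLeft (n - i)) :
    moveFactors n i = List.replicate (n - i - 1) (leftFactor n i) := by
  have movesList_eq : movesList (n - i) = List.replicate (n - i - 1) true := by
    rcases h with h | h
    · obtain ⟨k, hk⟩ : ∃ k, n - i = k + 3 := ⟨n - i - 3, by grind⟩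
      have heven : ¬Even (k + 3) := by rwa [Nat.not_even_iff_odd, ← hk]
      simp [movesList, hk, heven, List.replicate_succ, ← List.replicate_succ']
    · simp [movesList, h]
  simp [moveFactors, movesList_eq]

theorem moveFactors_of_not_isAllLeft (hi : i + 1 < n) (h : ¬IsAllLeft (n - i)) :
    moveFactors n i =
      leftFactor n i :: (List.replicate (n - i - 3) (rightFactor n i) ++ [leftFactor n i]) := by
  have heven : Even (n - i) := by grind
  have hlt : 2 < n - i := by grind
  simp [moveFactors, movesList, heven, hlt]

theorem leftFactor_eq_swap (h : i + 1 < n) :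
    leftFactor n i = swap ⟨i, Nat.lt_of_succ_lt h⟩ ⟨i + 1, h⟩ := by
  simp [leftFactor, leftMove, h, Perm.one_def]

theorem leftFactor_eq_one (h : n ≤ i + 1) : leftFactor n i = 1 := by
  simp [leftFactor, leftMove, h.not_gt]

theorem rightFactor_eq_cyc (h : i + 1 < n) :
    rightFactor n i = cyc ⟨i, Nat.lt_of_succ_lt h⟩ ⟨n - 1, by omega⟩ := by
  simp [rightFactor, rightMove, h, Perm.one_def]

theorem rightFactor_eq_one (h : n ≤ i + 1) : rightFactor n i = 1 := by
  simp [rightFactor, rightMove, h.not_gt]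

theorem leftFactor_mul_self : leftFactor n i * leftFactor n i = 1 := by
  by_cases h : i + 1 < n
  · rw [leftFactor_eq_swap h, swap_mul_self]
  · rw [leftFactor_eq_one (not_lt.1 h), one_mul]

theorem lastFactor_eq_one (h : n ≤ i + 1) : lastFactor n i = 1 := by
  have h' : n ≤ i + 1 + 1 := h.trans (Nat.le_succ _)
  simp [lastFactor, leftRound, rightRound, leftFactor_eq_one h, leftFactor_eq_one h',
    rightFactor_eq_one h]

theorem mem_tailPerms {σ : Perm (Fin n)} :
    σ ∈ tailPerms n i ↔ ∀ x : Fin n, (x : ℕ) < i → σ x = x := by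
  simp [tailPerms, mem_fixingSubgroup_iff]

theorem tailPerms_succ_le : tailPerms n (i + 1) ≤ tailPerms n i :=
  fixingSubgroup_antitone _ _ fun _ hx => Nat.lt_succ_of_lt hx

theorem leftFactor_mem_tailPerms : leftFactor n i ∈ tailPerms n i := by
  by_cases h : i + 1 < n
  · rw [leftFactor_eq_swap h, mem_tailPerms]
    exact fun x hx => swap_apply_of_ne_of_ne (Fin.ne_of_lt hx)
      (Fin.ne_of_lt (Nat.lt_succ_of_lt hx))
  · rw [leftFactor_eq_one (not_lt.1 h)]
    exact one_mem _

theorem support_rightFactor (h : i + 1 < n) :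
    (rightFactor n i).support = Finset.Ici ⟨i, Nat.lt_of_succ_lt h⟩ := by
  rw [rightFactor_eq_cyc h, support_cyc (Fin.mk_lt_mk.2 (by omega))]
  ext x
  simp [Fin.le_def, Nat.le_sub_one_of_lt x.2]

theorem rightFactor_mem_tailPerms : rightFactor n i ∈ tailPerms n i := by
  by_cases h : i + 1 < n
  · rw [mem_tailPerms]
    intro x hx
    rw [← notMem_support, support_rightFactor h]
    simpa [Fin.lt_def] using hx
  · rw [rightFactor_eq_one (not_lt.1 h)]
    exact one_mem _

theorem leftRound_mem_tailPerms : leftRound n i ∈ tailPerms n i :=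
  mul_mem (tailPerms_succ_le leftFactor_mem_tailPerms) leftFactor_mem_tailPerms

theorem rightRound_mem_tailPerms : rightRound n i ∈ tailPerms n i :=
  mul_mem (tailPerms_succ_le leftFactor_mem_tailPerms) rightFactor_mem_tailPerms

theorem lastFactor_mem_tailPerms : lastFactor n i ∈ tailPerms n i := by
  unfold lastFactor
  split_ifs
  · exact leftFactor_mem_tailPerms
  · exact mul_mem (mul_mem (mul_mem leftRound_mem_tailPerms
      (pow_mem rightRound_mem_tailPerms _)) leftRound_mem_tailPerms)
      (tailPerms_succ_le leftFactor_mem_tailPerms)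

theorem apply_ne_self_of_mem_tailPerms {σ : Perm (Fin n)} (h : i < n) (hσ : σ ∈ tailPerms n i)
    (hcard : σ.support.card = n - i) : σ ⟨i, h⟩ ≠ ⟨i, h⟩ := by
  have hsub : σ.support ⊆ Finset.Ici ⟨i, h⟩ := fun x hx => by
    by_contra hlt
    exact mem_support.1 hx (mem_tailPerms.1 hσ x (by simpa [Fin.lt_def] using hlt))
  have heq := Finset.eq_of_subset_of_card_le hsub (by rw [Fin.card_Ici, hcard])
  exact mem_support.1 (heq ▸ Finset.mem_Ici.2 le_rfl)

theorem rightFactor_apply_of_succ {p q : Fin n} (hp : i ≤ p) (hpq : (p : ℕ) + 1 = q) :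
    rightFactor n i q = p := by
  rw [rightFactor_eq_cyc (by omega)]
  exact cyc_apply_of_succ (by simpa [Fin.le_def]) (by simp [Fin.le_def]; omega) hpq

section ThreePositions

variable (h : i + 2 < n)
include h

theorem leftRound_eq_swap_mul_swap :
    leftRound n i = swap ⟨i + 1, by omega⟩ ⟨i + 2, h⟩ * swap ⟨i, by omega⟩ ⟨i + 1, by omega⟩ := by
  rw [leftRound, leftFactor_eq_swap, leftFactor_eq_swap]

theorem rightRound_eq_swap_mul :
    rightRound n i =
      swap ⟨i + 2, h⟩ (rightFactor n i ⟨i + 2, h⟩) * rightFactor n i := by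
  rw [rightRound, leftFactor_eq_swap h, swap_comm,
    rightFactor_apply_of_succ (p := ⟨i + 1, by omega⟩) (q := ⟨i + 2, h⟩) (Nat.le_succ i) rfl]

theorem rightFactor_apply_apply :
    rightFactor n i (rightFactor n i ⟨i + 2, h⟩) = ⟨i, by omega⟩ := by
  rw [rightFactor_apply_of_succ (p := ⟨i + 1, by omega⟩) (q := ⟨i + 2, h⟩) (Nat.le_succ i) rfl,
    rightFactor_apply_of_succ (p := ⟨i, by omega⟩) le_rfl rfl]

theorem isCycle_rightRound : (rightRound n i).IsCycle := by
  have isCycle_right : (rightFactor n i).IsCycle := by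
    rw [rightFactor_eq_cyc (by omega)]
    exact isCycle_cyc (Fin.mk_lt_mk.2 (by omega))
  rw [rightRound_eq_swap_mul h]
  refine isCycle_right.swap_mul ?_ ?_
  · rw [← mem_support, support_rightFactor (by omega)]
    simp
  · simp [rightFactor_apply_apply h]

theorem support_rightRound :
    (rightRound n i).support = Finset.Ici ⟨i, by omega⟩ \ {⟨i + 2, h⟩} := by
  rw [rightRound_eq_swap_mul h, support_swap_mul_eq, support_rightFactor (by omega)]
  simp [rightFactor_apply_apply h]

theorem card_support_rightRound : (rightRound n i).support.card = n - i - 1 := by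
  rw [support_rightRound h, Finset.card_sdiff_of_subset (by simp), Fin.card_Ici,
    Finset.card_singleton]

theorem rightRound_apply_succ : rightRound n i ⟨i + 1, by omega⟩ = ⟨i, by omega⟩ := by
  rw [rightRound, leftFactor_eq_swap h, mul_apply,
    rightFactor_apply_of_succ (p := ⟨i, by omega⟩) le_rfl rfl]
  exact swap_apply_of_ne_of_ne (by simp) (by simp [add_assoc])

theorem rightRound_pow_apply_add_two (r : ℕ) :
    (rightRound n i ^ r) ⟨i + 2, h⟩ = ⟨i + 2, h⟩ := by
  refine pow_apply_eq_self_of_apply_eq_self ?_ r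
  rw [← notMem_support, support_rightRound h]
  simp

theorem leftRound_apply_self : leftRound n i ⟨i, by omega⟩ = ⟨i + 2, h⟩ := by
  simp [leftRound_eq_swap_mul_swap h]

theorem leftRound_apply_succ : leftRound n i ⟨i + 1, by omega⟩ = ⟨i, by omega⟩ := by
  rw [leftRound_eq_swap_mul_swap h, mul_apply, swap_apply_right]
  exact swap_apply_of_ne_of_ne (by simp) (by simp)

end ThreePositions

theorem lastFactor_of_isAllLeft (h : IsAllLeft (n - i)) : lastFactor n i = leftFactor n i :=
  if_pos h

theorem lastFactor_of_not_isAllLeft (h : ¬IsAllLeft (n - i)) :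
    lastFactor n i =
      leftRound n i * rightRound n i ^ (n - i - 3) * leftRound n i * leftFactor n (i + 1) :=
  if_neg h

theorem lastFactor_succ_of_not_isAllLeft (hi : i + 1 < n) (h : ¬IsAllLeft (n - i)) :
    lastFactor n (i + 1) = leftFactor n (i + 1) :=
  lastFactor_of_isAllLeft (by grind)

theorem isCycle_and_support_rightRound_pow (hi : i + 1 < n) (h : ¬IsAllLeft (n - i)) :
    (rightRound n i ^ (n - i - 3)).IsCycle ∧
      (rightRound n i ^ (n - i - 3)).support = (rightRound n i).support := by
  have hi' : i + 2 < n := by grind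
  have coprime : (n - i - 3).Coprime (orderOf (rightRound n i)) := by
    obtain ⟨k, hk⟩ : ∃ k, n - i = 2 * k + 4 := ⟨(n - i) / 2 - 2, by grind⟩
    rw [(isCycle_rightRound hi').orderOf, card_support_rightRound hi', hk,
      show 2 * k + 4 - 1 = 2 + (2 * k + 4 - 3) by omega, Nat.coprime_add_self_right,
      Nat.coprime_two_right]
    exact ⟨k, by omega⟩
  exact ⟨(isCycle_rightRound hi').pow_iff.2 coprime, support_pow_coprime coprime⟩

theorem isCycle_and_card_support_of_odd (h : Odd (n - i)) (hlt : 3 < n - i) :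
    (lastFactor n (i + 1) * leftFactor n i).IsCycle ∧
      (lastFactor n (i + 1) * leftFactor n i).support.card = n - i := by
  have hnot : ¬IsAllLeft (n - (i + 1)) := by grind
  have hi3 : i + 1 + 2 < n := by omega
  set w : Fin n := ⟨i, by omega⟩
  set x : Fin n := ⟨i + 1, by omega⟩
  set y : Fin n := ⟨i + 2, by omega⟩
  set z : Fin n := ⟨i + 3, by omega⟩
  set d := rightRound n (i + 1) ^ (n - (i + 1) - 3)
  set u := swap y z * swap x y
  have nodup : [w, x, y, z].Nodup := by simp [w, x, y, z]
  obtain ⟨isCycle_d, support_d⟩ := isCycle_and_support_rightRound_pow (by omega) hnot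
  rw [support_rightRound hi3] at support_d
  -- Up to conjugation, the fixed points `z` and `w` of `d` are inserted into its cycle.
  have conj : lastFactor n (i + 1) * leftFactor n i = u * (d * swap y z * swap y w) * u⁻¹ := by
    rw [eq_mul_inv_iff_mul_eq, lastFactor_of_not_isAllLeft hnot, leftRound_eq_swap_mul_swap hi3,
      leftFactor_eq_swap hi3, leftFactor_eq_swap (show i + 1 < n by omega)]
    calc u * d * u * swap y z * swap w x * u = u * d * (u * (swap y z * swap w x) * u) := by
          simp only [mul_assoc]
      _ = u * (d * swap y z * swap y w) := by rw [swap_mul_swap_conj nodup]; simp only [mul_assoc]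
  have hdy : d y ≠ y := by rw [← mem_support, support_d]; simp [y, Fin.le_def]
  have hdz : d z = z := by rw [← notMem_support, support_d]; simp [z]
  have hdw : d w = w := by rw [← notMem_support, support_d]; simp [w, Fin.le_def]
  have hdzy : (d * swap y z) y ≠ y := by simp [hdz, z, y]
  have hdzw : (d * swap y z) w = w := by
    rw [mul_apply, swap_apply_of_ne_of_ne (by simp [w, y]) (by simp [w, z]), hdw]
  refine ⟨conj ▸ (isCycle_mul_swap (isCycle_mul_swap isCycle_d hdy hdz) hdzy hdzw).conj, ?_⟩
  rw [conj, card_support_conj, card_support_mul_swap hdzy hdzw, card_support_mul_swap hdy hdz,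
    support_d, ← support_rightRound hi3, card_support_rightRound hi3]
  omega

theorem isCycle_and_card_support_of_isAllLeft (hi : i + 1 < n) (h : IsAllLeft (n - i)) :
    (lastFactor n (i + 1) * leftFactor n i).IsCycle ∧
      (lastFactor n (i + 1) * leftFactor n i).support.card = n - i := by
  rcases eq_or_ne (n - i) 2 with h2 | h2
  · rw [lastFactor_eq_one (by omega), one_mul, leftFactor_eq_swap hi, h2]
    exact ⟨isCycle_swap (by simp), card_support_swap (by simp)⟩
  rcases eq_or_ne (n - i) 3 with h3 | h3
  · rw [lastFactor_of_isAllLeft (by grind), leftFactor_eq_swap hi,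
      leftFactor_eq_swap (i := i + 1) (by omega), swap_comm (⟨i, _⟩ : Fin n)]
    set w : Fin n := ⟨i, by omega⟩
    set x : Fin n := ⟨i + 1, by omega⟩
    set y : Fin n := ⟨i + 2, by omega⟩
    have hx : swap x y x ≠ x := by simp [x, y]
    have hw : swap x y w = w := swap_apply_of_ne_of_ne (by simp [w, x]) (by simp [w, y])
    have hxy : x ≠ y := by simp [x, y]
    refine ⟨isCycle_mul_swap (isCycle_swap hxy) hx hw, ?_⟩
    rw [card_support_mul_swap hx hw, card_support_swap hxy, h3]
  · exact isCycle_and_card_support_of_odd (h.resolve_right h2) (by grind)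

end Factors

section Scanl

variable {G : Type*} [Monoid G]

theorem scanl_replicate_append (q p a : G) (k : ℕ) (l : List G) :
    (List.replicate k p ++ l).scanl (fun t p => t * q * p) a =
      ((List.range k).map fun r => a * (q * p) ^ r) ++
        l.scanl (fun t p => t * q * p) (a * (q * p) ^ k) := by
  induction k generalizing a with
  | zero => simp
  | succ k ih =>
    rw [List.replicate_succ, List.cons_append, List.scanl_cons, ih, List.range_succ_eq_map]
    simp [Function.comp_def, pow_succ', mul_assoc]

theorem foldl_append_eq_flatMap_scanl {β : Type*} {E : G → List G} {q : G}
    (hE : ∀ a, (E a).getLast? = some (a * q)) (p : β → G) (bs : List β) (l : List G) (a c : G) :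
    bs.foldl (fun acc b => acc ++ E (acc.getLastD c * p b)) (l ++ E a) =
      l ++ ((bs.map p).scanl (fun t p => t * q * p) a).flatMap E := by
  induction bs generalizing l a with
  | nil => simp
  | cons b bs ih =>
    have getLastD_eq : (l ++ E a).getLastD c = a * q := by
      simp [List.getLastD_eq_getLast?, List.getLast?_append, hE]
    rw [List.foldl_cons, getLastD_eq, ih, List.map_cons, List.scanl_cons, List.flatMap_cons,
      List.append_assoc]

end Scanl

section Sweeps

/-- `l` lists the coset `a * tailPerms n i` without repetition, ending at `a * q`. That every
element of the coset occurs is encoded by the length. -/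
structure IsSweep (n i : ℕ) (q a : Perm (Fin n)) (l : List (Perm (Fin n))) : Prop where
  length_eq : l.length = (n - i).factorial
  nodup : l.Nodup
  getLast?_eq : l.getLast? = some (a * q)
  inv_mul_mem : ∀ b ∈ l, a⁻¹ * b ∈ tailPerms n i

/-- The arrangements passed to the successive recursive calls made by `gen(a, i)`. -/
def roundStarts (n i : ℕ) (a : Perm (Fin n)) : List (Perm (Fin n)) :=
  (moveFactors n i).scanl (fun t p => t * lastFactor n (i + 1) * p) a

/-- `l` picks one arrangement from each coset of `tailPerms n (i + 1)` inside `a * tailPerms n i`;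
such a coset is identified by the entry at position `i`. -/
structure IsTransversal {n : ℕ} (a : Perm (Fin n)) (i : Fin n) (l : List (Perm (Fin n))) :
    Prop where
  length_eq : l.length = n - i
  inv_mul_mem : ∀ t ∈ l, a⁻¹ * t ∈ tailPerms n i
  nodup_map_apply : (l.map (· i)).Nodup

variable {n i : ℕ}

theorem isSweep_singleton (a : Perm (Fin n)) (h : n ≤ i + 1) : IsSweep n i 1 a [a] where
  length_eq := (Nat.factorial_eq_one.2 (by omega)).symm
  nodup := List.nodup_singleton a
  getLast?_eq := by simp
  inv_mul_mem := by simp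

theorem IsTransversal.isSweep_flatMap {i : Fin n} {a q q' : Perm (Fin n)}
    {l : List (Perm (Fin n))} {E : Perm (Fin n) → List (Perm (Fin n))} (hl : IsTransversal a i l)
    (hE : ∀ t, IsSweep n (i + 1) q t (E t)) (hlast : l.getLast?.map (· * q) = some (a * q')) :
    IsSweep n i q' a (l.flatMap E) where
  length_eq := by
    simp only [List.length_flatMap, (hE _).length_eq, List.map_const', List.sum_replicate,
      hl.length_eq, smul_eq_mul]
    exact Nat.mul_factorial_pred (by omega)
  nodup := by
    refine List.nodup_flatMap.2 ⟨fun t _ => (hE t).nodup, ?_⟩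
    refine (List.pairwise_map.1 hl.nodup_map_apply).imp fun {s t} hst b hbs hbt => hst ?_
    have apply_eq {t : Perm (Fin n)} (hb : b ∈ E t) : b i = t i :=
      inv_eq_iff_eq.1 (mem_tailPerms.1 ((hE t).inv_mul_mem b hb) i (Nat.lt_succ_self _))
    exact (apply_eq hbs).symm.trans (apply_eq hbt)
  getLast?_eq := by
    obtain ⟨t, ht, hta⟩ := Option.map_eq_some_iff.1 hlast
    rw [List.getLast?_eq_some_iff] at ht
    obtain ⟨l', rfl⟩ := ht
    simp [List.getLast?_append, (hE t).getLast?_eq, hta]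
  inv_mul_mem := fun b hb => by
    obtain ⟨t, ht, hbt⟩ := List.mem_flatMap.1 hb
    have := mul_mem (hl.inv_mul_mem t ht) (tailPerms_succ_le ((hE t).inv_mul_mem b hbt))
    rwa [mul_assoc, mul_inv_cancel_left] at this

theorem gen_succ (hi : i + 1 < n) {f : ℕ}
    (h : ∀ a, (gen n f a (i + 1)).getLast? = some (a * lastFactor n (i + 1))) (a : Perm (Fin n)) :
    gen n (f + 1) a i = (roundStarts n i a).flatMap fun t => gen n f t (i + 1) := by
  simp only [gen, if_pos hi, move_eq_mul]
  exact foldl_append_eq_flatMap_scanl h _ (movesList (n - i)) [] a 1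

theorem roundStarts_of_isAllLeft (hi : i + 1 < n) (h : IsAllLeft (n - i)) (a : Perm (Fin n)) :
    roundStarts n i a =
      (List.range (n - i)).map fun r => a * (lastFactor n (i + 1) * leftFactor n i) ^ r := by
  obtain ⟨k, hk⟩ : ∃ k, n - i = k + 1 := ⟨n - i - 1, by omega⟩
  rw [roundStarts, moveFactors_of_isAllLeft hi h, ← List.append_nil (List.replicate _ _),
    scanl_replicate_append, List.scanl_nil, hk, List.range_succ, List.map_append,
    List.map_singleton, Nat.add_sub_cancel]

theorem roundStarts_of_not_isAllLeft (hi : i + 1 < n) (h : ¬IsAllLeft (n - i))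
    (a : Perm (Fin n)) :
    roundStarts n i a =
      (a :: (List.range (n - i - 2)).map fun r => a * leftRound n i * rightRound n i ^ r) ++
        [a * leftRound n i * rightRound n i ^ (n - i - 3) * leftRound n i] := by
  obtain ⟨k, hk⟩ : ∃ k, n - i = k + 3 := ⟨n - i - 3, by grind⟩
  rw [roundStarts, moveFactors_of_not_isAllLeft hi h, List.scanl_cons, scanl_replicate_append,
    lastFactor_succ_of_not_isAllLeft hi h, hk, show k + 3 - 2 = k + 1 by omega, List.range_succ]
  simp [leftRound, rightRound, mul_assoc]

theorem getLast?_roundStarts (hi : i + 1 < n) (a : Perm (Fin n)) :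
    (roundStarts n i a).getLast?.map (· * lastFactor n (i + 1)) = some (a * lastFactor n i) := by
  by_cases h : IsAllLeft (n - i)
  · obtain ⟨isCycle, card_support⟩ := isCycle_and_card_support_of_isAllLeft hi h
    obtain ⟨k, hk⟩ : ∃ k, n - i = k + 1 := ⟨n - i - 1, by omega⟩
    have pow_eq_one : (lastFactor n (i + 1) * leftFactor n i) ^ (k + 1) = 1 := by
      rw [← hk, ← card_support, ← isCycle.orderOf, pow_orderOf_eq_one]
    have last_eq : (lastFactor n (i + 1) * leftFactor n i) ^ k * lastFactor n (i + 1) =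
        leftFactor n i := by
      rw [pow_succ, ← mul_assoc] at pow_eq_one
      rw [eq_inv_of_mul_eq_one_left pow_eq_one, inv_eq_of_mul_eq_one_left leftFactor_mul_self]
    rw [roundStarts_of_isAllLeft hi h, lastFactor_of_isAllLeft h, hk, List.range_succ]
    simp [mul_assoc, last_eq]
  · rw [roundStarts_of_not_isAllLeft hi h, lastFactor_of_not_isAllLeft h,
      lastFactor_succ_of_not_isAllLeft hi h, List.getLast?_concat, Option.map_some]
    simp only [mul_assoc]

theorem isTransversal_of_isAllLeft (hi : i + 1 < n) (h : IsAllLeft (n - i)) (a : Perm (Fin n)) :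
    IsTransversal a ⟨i, by omega⟩ (roundStarts n i a) := by
  obtain ⟨isCycle, card_support⟩ := isCycle_and_card_support_of_isAllLeft hi h
  have hmem : lastFactor n (i + 1) * leftFactor n i ∈ tailPerms n i :=
    mul_mem (tailPerms_succ_le lastFactor_mem_tailPerms) leftFactor_mem_tailPerms
  have orbit_nodup := nodup_map_pow_apply isCycle
    (apply_ne_self_of_mem_tailPerms (by omega) hmem card_support)
  rw [roundStarts_of_isAllLeft hi h]
  refine ⟨by simp, ?_, ?_⟩
  · simp only [List.mem_map, forall_exists_index, and_imp, forall_apply_eq_imp_iff₂,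
      inv_mul_cancel_left]
    exact fun r _ => pow_mem hmem r
  · rw [card_support] at orbit_nodup
    simpa [Function.comp_def] using orbit_nodup.map a.injective

theorem map_apply_roundStarts_of_not_isAllLeft (hi : i + 2 < n) (h : ¬IsAllLeft (n - i))
    (a : Perm (Fin n)) :
    (roundStarts n i a).map (· ⟨i, by omega⟩) =
      (((List.range (n - i - 1)).map fun r => (rightRound n i ^ r) ⟨i + 1, by omega⟩) ++
        [(⟨i + 2, hi⟩ : Fin n)]).map (a * leftRound n i) := by
  rw [roundStarts_of_not_isAllLeft (by omega) h, show n - i - 1 = n - i - 2 + 1 by omega,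
    List.range_succ_eq_map]
  simp [Function.comp_def, pow_succ, rightRound_pow_apply_add_two hi, rightRound_apply_succ hi,
    leftRound_apply_self hi, leftRound_apply_succ hi]

theorem isTransversal_of_not_isAllLeft (hi : i + 1 < n) (h : ¬IsAllLeft (n - i))
    (a : Perm (Fin n)) : IsTransversal a ⟨i, by omega⟩ (roundStarts n i a) where
  length_eq := by
    rw [roundStarts_of_not_isAllLeft hi h]
    simp only [List.length_append, List.length_cons, List.length_map, List.length_range,
      List.length_nil]
    grind
  inv_mul_mem := by
    have left_mem : leftRound n i ∈ tailPerms n i := leftRound_mem_tailPerms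
    have right_mem (r : ℕ) : rightRound n i ^ r ∈ tailPerms n i :=
      pow_mem rightRound_mem_tailPerms r
    rw [roundStarts_of_not_isAllLeft hi h]
    simp only [List.cons_append, List.mem_cons, List.mem_append, List.mem_map, List.not_mem_nil,
      or_false]
    rintro t (rfl | ⟨r, -, rfl⟩ | rfl)
    · simp
    · simpa [mul_assoc] using mul_mem left_mem (right_mem r)
    · simpa [mul_assoc] using mul_mem (mul_mem left_mem (right_mem _)) left_mem
  nodup_map_apply := by
    have hi2 : i + 2 < n := by grind
    have orbit_nodup := nodup_map_pow_apply (isCycle_rightRound hi2) (x := ⟨i + 1, hi⟩)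
      (by rw [rightRound_apply_succ hi2]; simp)
    rw [card_support_rightRound hi2] at orbit_nodup
    rw [map_apply_roundStarts_of_not_isAllLeft hi2 h]
    refine (orbit_nodup.append (List.nodup_singleton _) ?_).map (a * leftRound n i).injective
    simp only [List.disjoint_singleton, List.mem_map, not_exists, not_and]
    intro r _ hr
    have succ_eq := (rightRound n i ^ r).injective
      (hr.trans (rightRound_pow_apply_add_two hi2 r).symm)
    simp at succ_eq

theorem gen_isSweep {f : ℕ} (hf : n ≤ f + i) (a : Perm (Fin n)) :
    IsSweep n i (lastFactor n i) a (gen n f a i) := by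
  induction f generalizing a i with
  | zero =>
    rw [lastFactor_eq_one (by omega)]
    exact isSweep_singleton a (by omega)
  | succ f ih =>
    by_cases hi : i + 1 < n
    · have sweep (t : Perm (Fin n)) := ih (i := i + 1) (by omega) t
      have transversal : IsTransversal a ⟨i, by omega⟩ (roundStarts n i a) := by
        by_cases h : IsAllLeft (n - i)
        · exact isTransversal_of_isAllLeft hi h a
        · exact isTransversal_of_not_isAllLeft hi h a
      rw [gen_succ hi fun t => (sweep t).getLast?_eq]
      exact transversal.isSweep_flatMap sweep (getLast?_roundStarts hi a)
    · rw [lastFactor_eq_one (not_lt.1 hi), gen, if_neg hi]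
      exact isSweep_singleton a (not_lt.1 hi)

end Sweeps

/-- `Gen n` has length `n!`, its entries are pairwise distinct, and consequently every
bijection of `Fin n` occurs exactly once in it. -/
theorem gen_length_nodup_count (n : ℕ) :
    (Gen n).length = n.factorial ∧ (Gen n).Nodup ∧
      ∀ σ : Equiv.Perm (Fin n), (Gen n).count σ = 1 := by
  have sweep : IsSweep n 0 (lastFactor n 0) 1 (Gen n) := gen_isSweep (Nat.le_add_right n 0) 1
  have toFinset_eq : (Gen n).toFinset = Finset.univ := by
    rw [← Finset.card_eq_iff_eq_univ, List.toFinset_card_of_nodup sweep.nodup, sweep.length_eq,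
      Fintype.card_perm, Fintype.card_fin, Nat.sub_zero]
  refine ⟨sweep.length_eq, sweep.nodup, fun σ => List.count_eq_one_of_mem sweep.nodup ?_⟩
  rw [← List.mem_toFinset, toFinset_eq]
  exact Finset.mem_univ σ
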